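/- arXiv:math/9807077 — 2 statements merged into one kernel-verified Lean document; each statement's English description precedes it below -/
import Mathlib

section
/- Let V be a vertex operator algebra with V = ⊕_{n∈ℕ} V_{(n)} (no negative weights) and V_{(0)} = ℂ1. If V satisfies the C₂-finiteness condition (dim V/C₂(V) < ∞), then V is finitely generated as a vertex operator algebra. (In this situation C₂(V) ⊆ C₁(V).) -/
noncomputable section

/-- The generalized binomial coefficient `C(m, i)` for `m ∈ ℤ`, `i ∈ ℕ`,
as a complex number: `m(m-1)⋯(m-i+1)/i!`. -/
def cchoose (m : ℤ) (i : ℕ) : ℂ :=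
  (∏ j ∈ Finset.range i, ((m : ℂ) - (j : ℂ))) / (Nat.factorial i : ℂ)

/-- A vertex operator algebra `V = ⊕ₙ V₍ₙ₎` over `ℂ`.  The vertex operator map is
recorded through its modes `op u n v = uₙ v` (so `Y(u,x)v = Σₙ uₙv x^{-n-1}`), with
vacuum `one`, conformal vector `omega` (with `L(k) = ω_{k+1}`), central charge `cc`,
weight grading `wtSpace` with projections `proj`.  The Jacobi identity is recorded in
the equivalent form of the Borcherds identity on modes. -/
structure VOA where
  carrier : Type
  [grp : AddCommGroup carrier]
  [mdl : Module ℂ carrier]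
  op : carrier → ℤ → carrier → carrier
  one : carrier
  omega : carrier
  wtSpace : ℤ → Submodule ℂ carrier
  proj : ℤ → carrier → carrier
  cc : ℂ
  op_linear_left : ∀ (n : ℤ) (w : carrier), IsLinearMap ℂ fun u => op u n w
  op_linear_right : ∀ (u : carrier) (n : ℤ), IsLinearMap ℂ (op u n)
  trunc : ∀ u v : carrier, ∃ N : ℤ, ∀ n : ℤ, N ≤ n → op u n v = 0
  one_op : ∀ (n : ℤ) (v : carrier), op one n v = if n = -1 then v else 0
  create_nonneg : ∀ (v : carrier) (n : ℤ), 0 ≤ n → op v n one = 0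
  create : ∀ v : carrier, op v (-1) one = v
  borcherds : ∀ (u v w : carrier) (l m n : ℤ),
    (∑ᶠ i : ℕ, cchoose m i • op (op u (l + (i : ℤ)) v) (m + n - (i : ℤ)) w)
      = ∑ᶠ i : ℕ, ((-1 : ℂ) ^ i * cchoose l i) •
          (op u (l + m - (i : ℤ)) (op v (n + (i : ℤ)) w)
            - ((-1 : ℂ) ^ l) • op v (l + n - (i : ℤ)) (op u (m + (i : ℤ)) w))
  proj_linear : ∀ n : ℤ, IsLinearMap ℂ (proj n)
  proj_mem : ∀ (n : ℤ) (v : carrier), proj n v ∈ wtSpace n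
  proj_eq : ∀ n : ℤ, ∀ v ∈ wtSpace n, proj n v = v
  proj_ne : ∀ m n : ℤ, m ≠ n → ∀ v ∈ wtSpace m, proj n v = 0
  proj_finite : ∀ v : carrier, (Function.support fun n => proj n v).Finite
  proj_sum : ∀ v : carrier, (∑ᶠ n : ℤ, proj n v) = v
  fd : ∀ n : ℤ, FiniteDimensional ℂ (wtSpace n)
  lower_trunc : ∃ N : ℤ, ∀ n : ℤ, n < N → wtSpace n = ⊥
  one_wt : one ∈ wtSpace 0
  omega_wt : omega ∈ wtSpace 2
  op_wt : ∀ k m n : ℤ, ∀ u ∈ wtSpace k, ∀ v ∈ wtSpace m, op u n v ∈ wtSpace (k + m - n - 1)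
  L_zero : ∀ n : ℤ, ∀ v ∈ wtSpace n, op omega 1 v = (n : ℂ) • v
  L_neg_one : ∀ (u : carrier) (n : ℤ) (w : carrier),
    op (op omega 0 u) n w = (-(n : ℂ)) • op u (n - 1) w
  virasoro : ∀ (m n : ℤ) (v : carrier),
    op omega (m + 1) (op omega (n + 1) v) - op omega (n + 1) (op omega (m + 1) v)
      = ((m : ℂ) - (n : ℂ)) • op omega (m + n + 1) v
        + (if m + n = 0 then (((m : ℂ) ^ 3 - (m : ℂ)) / 12) * cc else 0) • v

attribute [instance] VOA.grp VOA.mdl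

namespace VOA

variable (V : VOA)

/-- The Virasoro operator `L(k) = ω_{k+1}`. -/
def L (k : ℤ) (v : V.carrier) : V.carrier := V.op V.omega (k + 1) v

/-- The positive-weight part `V₊ = ⊕_{n ≥ 1} V₍ₙ₎`. -/
def pos : Submodule ℂ V.carrier := ⨆ (n : ℤ) (_ : 1 ≤ n), V.wtSpace n

/-- Zhu's subspace `C₂(V) = span{u₋₂v : u, v ∈ V}`. -/
def C2 : Submodule ℂ V.carrier :=
  Submodule.span ℂ {x : V.carrier | ∃ u v : V.carrier, x = V.op u (-2) v}

/-- The subspace `C₁(V) = span(v₋₁V₊ (v ∈ V₊) together with L(-1)V)`. -/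
def C1 : Submodule ℂ V.carrier :=
  Submodule.span ℂ
    ({x : V.carrier | ∃ u ∈ V.pos, ∃ v ∈ V.pos, x = V.op u (-1) v}
      ∪ {x : V.carrier | ∃ v : V.carrier, x = V.op V.omega 0 v})

/-- Iterated application of modes: `iterApply [(u¹,n₁),…,(uʳ,n_r)] w = u¹_{n₁} ⋯ uʳ_{n_r} w`. -/
def iterApply : List (V.carrier × ℤ) → V.carrier → V.carrier
  | [], w => w
  | p :: l, w => V.op p.1 p.2 (iterApply l w)

/-- `U ⊆ V` generates `V` as a vertex operator algebra:  `V` is linearly spanned by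
the elements `u¹_{n₁} ⋯ uʳ_{n_r} 1` with `uⁱ ∈ U`, `n_i ∈ ℤ`. -/
def generates (U : Set V.carrier) : Prop :=
  Submodule.span ℂ {x : V.carrier | ∃ l : List (V.carrier × ℤ),
    (∀ p ∈ l, p.1 ∈ U) ∧ x = V.iterApply l V.one} = ⊤

/-- `V` is finitely generated as a vertex operator algebra. -/
def FinitelyGenerated : Prop := ∃ S : Finset V.carrier, V.generates ↑S

end VOA

/-- A weak `V`-module: all axioms of a module (truncation, vacuum, Jacobi identity in
Borcherds form) except those involving gradings. -/
structure WeakModule (V : VOA) where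
  carrier : Type
  [grp : AddCommGroup carrier]
  [mdl : Module ℂ carrier]
  op : V.carrier → ℤ → carrier → carrier
  op_linear_left : ∀ (n : ℤ) (w : carrier), IsLinearMap ℂ fun u => op u n w
  op_linear_right : ∀ (u : V.carrier) (n : ℤ), IsLinearMap ℂ (op u n)
  trunc : ∀ (u : V.carrier) (w : carrier), ∃ N : ℤ, ∀ n : ℤ, N ≤ n → op u n w = 0
  one_op : ∀ (n : ℤ) (w : carrier), op V.one n w = if n = -1 then w else 0
  borcherds : ∀ (u v : V.carrier) (w : carrier) (l m n : ℤ),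
    (∑ᶠ i : ℕ, cchoose m i • op (V.op u (l + (i : ℤ)) v) (m + n - (i : ℤ)) w)
      = ∑ᶠ i : ℕ, ((-1 : ℂ) ^ i * cchoose l i) •
          (op u (l + m - (i : ℤ)) (op v (n + (i : ℤ)) w)
            - ((-1 : ℂ) ^ l) • op v (l + n - (i : ℤ)) (op u (m + (i : ℤ)) w))

attribute [instance] WeakModule.grp WeakModule.mdl

namespace WeakModule

variable {V : VOA} (W : WeakModule V)

/-- `L(0)` acting on a weak module, as a linear map. -/
def L0 : W.carrier →ₗ[ℂ] W.carrier := IsLinearMap.mk' _ (W.op_linear_right V.omega 1)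

/-- The `L(0)`-eigenspace of eigenvalue `h`. -/
def eig (h : ℂ) : Submodule ℂ W.carrier :=
  LinearMap.ker (W.L0 - h • (LinearMap.id : W.carrier →ₗ[ℂ] W.carrier))

/-- The coefficient `v*ₙ` of the adjoint vertex operator
`⟨Y*(v,x)α, w⟩ = ⟨α, Y(e^{xL(1)}(-x^{-2})^{L(0)}v, x^{-1})w⟩` acting on the full dual
space: for `v` homogeneous of weight `h`,
`(v*ₙ α)(w) = (-1)^h Σ_{i≥0} (1/i!) α((L(1)^i v)_{2h-n-i-2} w)`, extended to general
`v` via the weight-space projections. -/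
def dmode (v : V.carrier) (n : ℤ) (α : W.carrier → ℂ) (w : W.carrier) : ℂ :=
  ∑ᶠ h : ℤ, ∑ᶠ i : ℕ,
    ((-1 : ℂ) ^ h / (Nat.factorial i : ℂ)) *
      α (W.op ((V.L 1)^[i] (V.proj h v)) (2 * h - n - (i : ℤ) - 2) w)

/-- `D(W) ⊆ W*`: the linear functionals `α` on `W` such that for every `v ∈ V`,
`Y*(v,x)α ∈ W*((x))`, i.e. `v*ₙ α = 0` for `n` sufficiently large. -/
def DW : Set (W.carrier → ℂ) :=
  {α | IsLinearMap ℂ α ∧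
    ∀ v : V.carrier, ∃ N : ℤ, ∀ n : ℤ, N ≤ n → ∀ w : W.carrier, W.dmode v n α w = 0}

/-- A subspace stable under all modes of all vertex operators, i.e. a `V`-submodule. -/
def IsStable (S : Submodule ℂ W.carrier) : Prop :=
  ∀ (v : V.carrier) (n : ℤ), ∀ m ∈ S, W.op v n m ∈ S

/-- An irreducible (nonzero, no proper nonzero stable subspaces) `V`-submodule. -/
def IsIrreducibleSub (S : Submodule ℂ W.carrier) : Prop :=
  S ≠ ⊥ ∧ W.IsStable S ∧
    ∀ T : Submodule ℂ W.carrier, W.IsStable T → T ≤ S → T = ⊥ ∨ T = S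

/-- A stable subspace which is an ordinary module: `L(0)` acts semisimply on it with
finite-dimensional eigenspaces, and for each `h` the eigenvalues `h + m` do not occur
for `m` a sufficiently negative integer. -/
def IsOrdinarySub (S : Submodule ℂ W.carrier) : Prop :=
  S ≤ (⨆ h : ℂ, W.eig h ⊓ S) ∧ (∀ h : ℂ, FiniteDimensional ℂ ↥(W.eig h ⊓ S)) ∧
    ∀ h : ℂ, ∃ N : ℤ, ∀ m : ℤ, m ≤ N → W.eig (h + (m : ℂ)) ⊓ S = ⊥

/-- The weak module `W` is irreducible. -/
def IsIrreducible : Prop :=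
  (⊥ : Submodule ℂ W.carrier) ≠ ⊤ ∧
    ∀ S : Submodule ℂ W.carrier, W.IsStable S → S = ⊥ ∨ S = ⊤

/-- `Cₙ(W) = span{v₋ₙw : v ∈ V, w ∈ W}`. -/
def Cn (n : ℤ) : Submodule ℂ W.carrier :=
  Submodule.span ℂ {x : W.carrier | ∃ (v : V.carrier) (w : W.carrier), x = W.op v (-n) w}

/-- `B(W) = span(u₋₁W (u ∈ V₊) together with v₀W (v homogeneous, wt v ≥ 2))`. -/
def BW : Submodule ℂ W.carrier :=
  Submodule.span ℂ
    ({x : W.carrier | ∃ v ∈ V.pos, ∃ w : W.carrier, x = W.op v (-1) w}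
      ∪ {x : W.carrier | ∃ k : ℤ, 2 ≤ k ∧ ∃ v ∈ V.wtSpace k, ∃ w : W.carrier, x = W.op v 0 w})

/-- Zhu's subspace `O(W) = span{Σ_{i≥0} C(wt v, i) v_{i-2} w}` so that `A(W) = W/O(W)`. -/
def OW : Submodule ℂ W.carrier :=
  Submodule.span ℂ
    {x : W.carrier | ∃ (k : ℤ) (v : V.carrier), v ∈ V.wtSpace k ∧
      ∃ w : W.carrier, x = ∑ᶠ i : ℕ, cchoose k i • W.op v ((i : ℤ) - 2) w}

/-- A subspace `T ⊇ O(W)` of `W` is closed under the Frenkel–Zhu left and right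
`A(V)`-actions `v * w = Σᵢ C(wt v, i) v_{i-1} w` and `w * v = Σᵢ C(wt v - 1, i) v_{i-1} w`;
for `T ⊇ O(W)` this expresses that `T/O(W)` is an `A(V)`-sub-bimodule of `A(W)`. -/
def BimoduleClosed (T : Submodule ℂ W.carrier) : Prop :=
  ∀ k : ℤ, ∀ v ∈ V.wtSpace k, ∀ w ∈ T,
    (∑ᶠ i : ℕ, cchoose k i • W.op v ((i : ℤ) - 1) w) ∈ T ∧
    (∑ᶠ i : ℕ, cchoose (k - 1) i • W.op v ((i : ℤ) - 1) w) ∈ T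

/-- Equivalence (isomorphism) of weak modules. -/
def Equiv (M N : WeakModule V) : Prop :=
  ∃ e : M.carrier ≃ₗ[ℂ] N.carrier,
    ∀ (v : V.carrier) (n : ℤ) (w : M.carrier), e (M.op v n w) = N.op v n (e w)

end WeakModule

/-- `V` is of class 𝒜: `L(0)` acts semisimply on every weak `V`-module. -/
def VOA.classA (V : VOA) : Prop :=
  ∀ M : WeakModule V, (⨆ h : ℂ, M.eig h) = ⊤

/-- `V` is regular: every weak `V`-module is a direct sum of irreducible ordinary
`V`-modules. -/
def VOA.regular (V : VOA) : Prop :=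
  ∀ M : WeakModule V, ∃ (ι : Type) (S : ι → Submodule ℂ M.carrier),
    (∀ i, M.IsIrreducibleSub (S i) ∧ M.IsOrdinarySub (S i)) ∧
    (∀ i, Disjoint (S i) (⨆ (j : ι) (_ : j ≠ i), S j)) ∧ (⨆ i, S i) = ⊤

/-- A generalized `V`-module: a weak module with a semisimple `L(0)`-action, graded by
the `L(0)`-eigenvalues, with weight-space projections `projW`. -/
structure GenModule (V : VOA) extends WeakModule V where
  wt : ℂ → Submodule ℂ carrier
  projW : ℂ → carrier → carrier
  projW_linear : ∀ h : ℂ, IsLinearMap ℂ (projW h)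
  projW_mem : ∀ (h : ℂ) (w : carrier), projW h w ∈ wt h
  projW_eq : ∀ h : ℂ, ∀ w ∈ wt h, projW h w = w
  projW_ne : ∀ g h : ℂ, g ≠ h → ∀ w ∈ wt g, projW h w = 0
  projW_finite : ∀ w : carrier, (Function.support fun h => projW h w).Finite
  projW_sum : ∀ w : carrier, (∑ᶠ h : ℂ, projW h w) = w
  wt_L0 : ∀ h : ℂ, ∀ w ∈ wt h, op V.omega 1 w = h • w
  wt_op : ∀ k : ℤ, ∀ v ∈ V.wtSpace k, ∀ (h : ℂ) (n : ℤ), ∀ w ∈ wt h,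
    op v n w ∈ wt (h + (k : ℂ) - (n : ℂ) - 1)

/-- An ordinary `V`-module: a generalized module whose weight spaces are
finite-dimensional and whose weights are truncated from below in each coset `h + ℤ`. -/
structure OrdModule (V : VOA) extends GenModule V where
  wt_fd : ∀ h : ℂ, FiniteDimensional ℂ ↥(wt h)
  wt_lower : ∀ h : ℂ, ∃ N : ℤ, ∀ m : ℤ, m ≤ N → wt (h + (m : ℂ)) = ⊥

namespace GenModule

variable {V : VOA} (W : GenModule V)

/-- `W₊ = ⊕_{Re h > 0} W₍ₕ₎`. -/
def posW : Submodule ℂ W.carrier := ⨆ (h : ℂ) (_ : 0 < h.re), W.wt h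

/-- `C₁(W) = span(v₋₁W₊ (v ∈ V₊) together with L(-1)W)`. -/
def C1W : Submodule ℂ W.carrier :=
  Submodule.span ℂ
    ({x : W.carrier | ∃ v ∈ V.pos, ∃ w ∈ W.posW, x = W.op v (-1) w}
      ∪ {x : W.carrier | ∃ w : W.carrier, x = W.op V.omega 0 w})

/-- The restricted dual `W' = ⊕ₕ W₍ₕ₎* ⊆ W*`: the linear functionals vanishing on all
but finitely many weight spaces. -/
def restrictedDual : Set (W.carrier → ℂ) :=
  {α | IsLinearMap ℂ α ∧ {h : ℂ | ∃ w ∈ W.wt h, α w ≠ 0}.Finite}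

end GenModule

/-- `D(W)⁰`: the sum of the `L(0)`-eigenspaces of the weak module `D(W) ⊆ W*`, where
`L*(0) = ω*₁` acts on `α ∈ W*` by `(L*(0)α)(w) = α(L(0)w)`. -/
def OrdModule.DW0 {V : VOA} (W : OrdModule V) : Set (W.carrier → ℂ) :=
  {α | ∃ (S : Finset ℂ) (f : ℂ → (W.carrier → ℂ)),
    (∀ h ∈ S, f h ∈ W.toWeakModule.DW ∧
      ∀ w : W.carrier, f h (W.op V.omega 1 w) = h * f h w) ∧
    α = ∑ h ∈ S, f h}

/-- An ℕ-gradable weak `V`-module: a weak module with an ℕ-grading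
`W = ⊕_{n∈ℕ} W(n)` with `v_m W(n) ⊆ W(wt v + n - m - 1)` (graded pieces of negative
index are zero). -/
structure NGradedModule (V : VOA) extends WeakModule V where
  gr : ℤ → Submodule ℂ carrier
  gr_neg : ∀ n : ℤ, n < 0 → gr n = ⊥
  gr_sup : (⨆ n : ℤ, gr n) = ⊤
  gr_indep : ∀ n : ℤ, Disjoint (gr n) (⨆ (m : ℤ) (_ : m ≠ n), gr m)
  gr_op : ∀ k : ℤ, ∀ v ∈ V.wtSpace k, ∀ m n : ℤ, ∀ w ∈ gr n,
    op v m w ∈ gr (k + n - m - 1)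

/-- An intertwining operator of type `(W₃; W₁ W₂)` in the sense of
Frenkel–Huang–Lepowsky, recorded through its complex-indexed modes
`I w₁ h w₂ = (w₁)ₕ w₂` (so `Y(w₁,x)w₂ = Σ_{h∈ℂ} (w₁)ₕ w₂ x^{-h-1}`):
linearity, truncation, the `L(-1)`-derivative property, and the Jacobi identity in
component (Borcherds) form. -/
def IsIntertwiner {V : VOA} (W1 W2 W3 : OrdModule V)
    (I : W1.carrier → ℂ → W2.carrier → W3.carrier) : Prop :=
  (∀ (h : ℂ) (w2 : W2.carrier), IsLinearMap ℂ fun w1 => I w1 h w2) ∧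
  (∀ (w1 : W1.carrier) (h : ℂ), IsLinearMap ℂ (I w1 h)) ∧
  (∀ (w1 : W1.carrier) (w2 : W2.carrier) (h : ℂ),
    ∃ N : ℤ, ∀ n : ℤ, N ≤ n → I w1 (h + (n : ℂ)) w2 = 0) ∧
  (∀ (w1 : W1.carrier) (h : ℂ) (w2 : W2.carrier),
    I (W1.op V.omega 0 w1) h w2 = (-h) • I w1 (h - 1) w2) ∧
  (∀ (u : V.carrier) (w1 : W1.carrier) (w2 : W2.carrier) (l m : ℤ) (h : ℂ),
    (∑ᶠ i : ℕ, cchoose m i • I (W1.op u (l + (i : ℤ)) w1) ((m : ℂ) + h - (i : ℂ)) w2)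
      = ∑ᶠ i : ℕ, ((-1 : ℂ) ^ i * cchoose l i) •
          (W3.op u (l + m - (i : ℤ)) (I w1 (h + (i : ℂ)) w2)
            - ((-1 : ℂ) ^ l) • I w1 ((l : ℂ) + h - (i : ℂ)) (W2.op u (m + (i : ℤ)) w2)))

/-- The fusion rule `dim I(W₃; W₁W₂)` is finite: the space of intertwining operators of
the indicated type is finite-dimensional. -/
def FusionFinite {V : VOA} (W1 W2 W3 : OrdModule V) : Prop :=
  FiniteDimensional ℂ
    ↥(Submodule.span ℂ {I : W1.carrier → ℂ → W2.carrier → W3.carrier |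
        IsIntertwiner W1 W2 W3 I})

end

/-!
The component of weight `n` of an element of `C₂(V)` is a sum of vectors `u₋₂v` with
`wt u + wt v + 1 = n`. As no weight is negative, `u` and `v` have weight less than `n`. Hence if a
set `U` of homogeneous vectors spans `V` modulo `C₂(V)`, then by induction on the weight every
vector lies in the span of the iterated modes of `U` on the vacuum, which is closed under products
by the iterate formula. For `C₂(V) ⊆ C₁(V)` one writes `u₋₂v = (L(-1)u)₋₁v`, where `L(-1)u` has
positive weight.
-/

theorem exists_finset_subset_span_sup_eq_top {R M : Type*} [Ring R] [AddCommGroup M] [Module R M]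
    (N : Submodule R M) [Module.Finite R (M ⧸ N)] {s : Set M} (hs : Submodule.span R s = ⊤) :
    ∃ t : Finset M, ↑t ⊆ s ∧ Submodule.span R (t : Set M) ⊔ N = ⊤ := by
  classical
  have span_image : Submodule.span R (N.mkQ '' s) = ⊤ := by
    rw [← Submodule.map_span, hs, Submodule.map_top, Submodule.range_mkQ]
  obtain ⟨t', ht's, ht'⟩ := (Submodule.fg_span_iff_fg_span_finset_subset (N.mkQ '' s)).1
    (span_image ▸ Module.Finite.fg_top)
  obtain ⟨t, hts, rfl⟩ := Finset.subset_set_image_iff.1 ht's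
  refine ⟨t, hts, ?_⟩
  rw [sup_comm, ← Submodule.map_mkQ_eq_top, Submodule.map_span, ← Finset.coe_image, ← ht',
    span_image]

theorem cchoose_zero_left (i : ℕ) : cchoose 0 i = if i = 0 then 1 else 0 := by
  rcases i with _ | i
  · simp [cchoose]
  · simp [cchoose, Finset.prod_range_succ']

namespace VOA

variable (V : VOA)

section Modes

/-- The `n`-th mode product `(u, v) ↦ uₙv` as a bilinear map. -/
def mode (n : ℤ) : V.carrier →ₗ[ℂ] V.carrier →ₗ[ℂ] V.carrier :=
  LinearMap.mk₂ ℂ (fun u v => V.op u n v)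
    (fun u u' v => (V.op_linear_left n v).map_add u u')
    (fun c u v => (V.op_linear_left n v).map_smul c u)
    (fun u v v' => (V.op_linear_right u n).map_add v v')
    (fun c u v => (V.op_linear_right u n).map_smul c v)

@[simp]
theorem mode_apply (n : ℤ) (u v : V.carrier) : V.mode n u v = V.op u n v := rfl

theorem op_op (u v w : V.carrier) (l n : ℤ) :
    V.op (V.op u l v) n w = ∑ᶠ i : ℕ, ((-1 : ℂ) ^ i * cchoose l i) •
      (V.op u (l - i) (V.op v (n + i) w) - ((-1 : ℂ) ^ l) • V.op v (l + n - i) (V.op u i w)) := by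
  have h := V.borcherds u v w l 0 n
  rw [finsum_eq_single _ 0 fun i hi => by simp [cchoose_zero_left, hi]] at h
  simpa [cchoose_zero_left] using h

theorem op_neg_two (u v : V.carrier) : V.op u (-2) v = V.op (V.op V.omega 0 u) (-1) v := by
  simp [V.L_neg_one]

theorem C2_eq_map₂ : V.C2 = Submodule.map₂ (V.mode (-2)) ⊤ ⊤ := by
  rw [C2, ← Submodule.span_univ, Submodule.map₂_span_span]
  congr 1
  ext x
  simp [eq_comm]

end Modes

section Grading

/-- The projection onto the weight space `V₍ₙ₎` as a linear map. -/
def wtProj (n : ℤ) : V.carrier →ₗ[ℂ] V.carrier :=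
  IsLinearMap.mk' (V.proj n) (V.proj_linear n)

@[simp]
theorem wtProj_apply (n : ℤ) (v : V.carrier) : V.wtProj n v = V.proj n v := rfl

theorem iSup_wtSpace : ⨆ n, V.wtSpace n = ⊤ := by
  refine eq_top_iff.2 fun v _ => V.proj_sum v ▸ ?_
  exact finsum_induction (· ∈ ⨆ n, V.wtSpace n) (zero_mem _) (fun _ _ => add_mem)
    fun n => Submodule.mem_iSup_of_mem n (V.proj_mem n v)

variable {V}

theorem proj_mem_of_mem_wtSpace {S : Submodule ℂ V.carrier} {m n : ℤ} {v : V.carrier}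
    (hv : v ∈ V.wtSpace m) (hS : m = n → v ∈ S) : V.proj n v ∈ S := by
  by_cases hmn : m = n
  · rw [V.proj_eq n v (hmn ▸ hv)]
    exact hS hmn
  · rw [V.proj_ne m n hmn v hv]
    exact S.zero_mem

theorem wtSpace_le_pos {n : ℤ} (hn : 1 ≤ n) : V.wtSpace n ≤ V.pos :=
  le_iSup₂_of_le n hn le_rfl

theorem C2_le_of_forall_homogeneous (hneg : ∀ n : ℤ, n < 0 → V.wtSpace n = ⊥)
    {S : Submodule ℂ V.carrier}
    (hS : ∀ i j : ℤ, 0 ≤ i → 0 ≤ j →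
      ∀ u ∈ V.wtSpace i, ∀ v ∈ V.wtSpace j, V.op u (-2) v ∈ S) :
    V.C2 ≤ S := by
  simp only [C2_eq_map₂, ← iSup_wtSpace, Submodule.map₂_iSup_left, Submodule.map₂_iSup_right,
    iSup_le_iff]
  intro j i
  rcases lt_or_ge i 0 with hi | hi
  · simp [hneg i hi]
  rcases lt_or_ge j 0 with hj | hj
  · simp [hneg j hj]
  exact Submodule.map₂_le.2 (hS i j hi hj)

theorem C2_le_C1 (hneg : ∀ n : ℤ, n < 0 → V.wtSpace n = ⊥)
    (h0 : V.wtSpace 0 = Submodule.span ℂ {V.one}) : V.C2 ≤ V.C1 := by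
  refine C2_le_of_forall_homogeneous hneg fun i j hi hj u hu v hv => ?_
  rw [V.op_neg_two]
  rcases hj.eq_or_lt with rfl | hj
  · rw [h0] at hv
    obtain ⟨c, rfl⟩ := Submodule.mem_span_singleton.1 hv
    rw [(V.op_linear_right _ _).map_smul, V.create]
    exact Submodule.smul_mem _ c (Submodule.subset_span (Or.inr ⟨u, rfl⟩))
  · have L_neg_one_mem_pos : V.op V.omega 0 u ∈ V.pos :=
      wtSpace_le_pos (by lia) (V.op_wt 2 i 0 _ V.omega_wt u hu)
    exact Submodule.subset_span (Or.inl ⟨_, L_neg_one_mem_pos, v, wtSpace_le_pos hj hv, rfl⟩)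

end Grading

section Generation

/-- The vertex subalgebra generated by `U`: the span of the iterated modes of elements of `U`
applied to the vacuum. By definition `U` generates `V` when it is all of `V`. -/
def genSpan (U : Set V.carrier) : Submodule ℂ V.carrier :=
  Submodule.span ℂ {x : V.carrier | ∃ l : List (V.carrier × ℤ),
    (∀ p ∈ l, p.1 ∈ U) ∧ x = V.iterApply l V.one}

/-- The vectors all of whose modes preserve the subspace `S`. It contains the vacuum
and is closed under all modes, so if it contains `U` then it contains all that `U` generates. -/
def modeStabilizer (S : Submodule ℂ V.carrier) : Submodule ℂ V.carrier :=
  ⨅ (n : ℤ) (w : S), S.comap ((V.mode n).flip w)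

variable {V} {U : Set V.carrier} {S : Submodule ℂ V.carrier}

theorem mem_modeStabilizer {u : V.carrier} :
    u ∈ V.modeStabilizer S ↔ ∀ (n : ℤ), ∀ w ∈ S, V.op u n w ∈ S := by
  simp [modeStabilizer]

theorem one_mem_modeStabilizer : V.one ∈ V.modeStabilizer S := by
  refine mem_modeStabilizer.2 fun n w hw => ?_
  rw [V.one_op]
  split_ifs
  exacts [hw, S.zero_mem]

theorem op_mem_modeStabilizer {u v : V.carrier} (hu : u ∈ V.modeStabilizer S)
    (hv : v ∈ V.modeStabilizer S) (l : ℤ) : V.op u l v ∈ V.modeStabilizer S := by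
  rw [mem_modeStabilizer] at hu hv ⊢
  intro n w hw
  rw [V.op_op]
  exact finsum_induction (· ∈ S) S.zero_mem (fun _ _ => S.add_mem) fun i =>
    S.smul_mem _ (S.sub_mem (hu _ _ (hv _ _ hw)) (S.smul_mem _ (hv _ _ (hu _ _ hw))))

theorem one_mem_genSpan : V.one ∈ V.genSpan U :=
  Submodule.subset_span ⟨[], by simp, rfl⟩

theorem genSpan_le (h_one : V.one ∈ S)
    (h_op : ∀ u ∈ U, ∀ (n : ℤ), ∀ w ∈ S, V.op u n w ∈ S) : V.genSpan U ≤ S := by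
  refine Submodule.span_le.2 ?_
  rintro _ ⟨l, hl, rfl⟩
  induction l with
  | nil => exact h_one
  | cons p l ih =>
    rw [List.forall_mem_cons] at hl
    exact h_op p.1 hl.1 p.2 _ (ih hl.2)

theorem subset_modeStabilizer_genSpan : U ⊆ V.modeStabilizer (V.genSpan U) := by
  refine fun u hu => mem_modeStabilizer.2 fun n => ?_
  change V.genSpan U ≤ (V.genSpan U).comap (V.mode n u)
  refine Submodule.span_le.2 ?_
  rintro _ ⟨l, hl, rfl⟩
  exact Submodule.subset_span ⟨(u, n) :: l, List.forall_mem_cons.2 ⟨hu, hl⟩, rfl⟩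

theorem genSpan_le_modeStabilizer : V.genSpan U ≤ V.modeStabilizer (V.genSpan U) :=
  genSpan_le one_mem_modeStabilizer fun _ hu n _ hw =>
    op_mem_modeStabilizer (subset_modeStabilizer_genSpan hu) hw n

theorem op_mem_genSpan {u v : V.carrier} (hu : u ∈ V.genSpan U) (n : ℤ) (hv : v ∈ V.genSpan U) :
    V.op u n v ∈ V.genSpan U :=
  mem_modeStabilizer.1 (genSpan_le_modeStabilizer hu) n v hv

theorem subset_genSpan : U ⊆ V.genSpan U := fun u hu => by
  simpa [V.create] using
    mem_modeStabilizer.1 (subset_modeStabilizer_genSpan hu) (-1) V.one one_mem_genSpan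

theorem C2_le_comap_wtProj_genSpan (hneg : ∀ n : ℤ, n < 0 → V.wtSpace n = ⊥) {n : ℤ}
    (hlt : ∀ k < n, V.wtSpace k ≤ V.genSpan U) :
    V.C2 ≤ (V.genSpan U).comap (V.wtProj n) :=
  C2_le_of_forall_homogeneous hneg fun i j hi hj u hu v hv =>
    proj_mem_of_mem_wtSpace (V.op_wt i j (-2) u hu v hv) fun hn =>
      op_mem_genSpan (hlt i (by lia) hu) (-2) (hlt j (by lia) hv)

theorem generates_of_span_sup_C2_eq_top (hneg : ∀ n : ℤ, n < 0 → V.wtSpace n = ⊥)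
    (hU : U ⊆ ⋃ n, (V.wtSpace n : Set V.carrier)) (hspan : Submodule.span ℂ U ⊔ V.C2 = ⊤) :
    V.generates U := by
  have span_le (n : ℤ) : Submodule.span ℂ U ≤ (V.genSpan U).comap (V.wtProj n) := by
    refine Submodule.span_le.2 fun u hu => ?_
    obtain ⟨m, hm⟩ := Set.mem_iUnion.1 (hU hu)
    exact proj_mem_of_mem_wtSpace hm fun _ => subset_genSpan hu
  have wtSpace_le (n : ℤ) : V.wtSpace n ≤ V.genSpan U := by
    induction n using Int.strongRec (m := 0) with
    | lt n hn => rw [hneg n hn]; exact bot_le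
    | ge n _ ih =>
      have top_le : ⊤ ≤ (V.genSpan U).comap (V.wtProj n) :=
        hspan ▸ sup_le (span_le n) (C2_le_comap_wtProj_genSpan hneg ih)
      intro v hv
      simpa [V.proj_eq n v hv] using top_le (Submodule.mem_top (x := v))
  exact eq_top_iff.2 (V.iSup_wtSpace ▸ iSup_le wtSpace_le)

theorem finitelyGenerated_of_finiteDimensional_quotient_C2
    (hneg : ∀ n : ℤ, n < 0 → V.wtSpace n = ⊥) [FiniteDimensional ℂ (V.carrier ⧸ V.C2)] :
    V.FinitelyGenerated := by
  have span_homogeneous : Submodule.span ℂ (⋃ n, (V.wtSpace n : Set V.carrier)) = ⊤ := by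
    rw [← Submodule.iSup_eq_span, V.iSup_wtSpace]
  obtain ⟨U, hU, hspan⟩ := exists_finset_subset_span_sup_eq_top V.C2 span_homogeneous
  exact ⟨U, generates_of_span_sup_C2_eq_top hneg hU hspan⟩

end Generation

end VOA

/-- Suppose `V = ⊕_{n∈ℕ} V₍ₙ₎` (no negative weights) with
`V₍₀₎ = ℂ1`.  Then `C₂(V) ⊆ C₁(V)`, and if `V` satisfies the `C₂`-finiteness condition
(`dim V/C₂(V) < ∞`) then `V` is finitely generated as a vertex operator algebra. -/
theorem finitelyGenerated_of_C2_finite (V : VOA)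
    (hneg : ∀ n : ℤ, n < 0 → V.wtSpace n = ⊥)
    (h0 : V.wtSpace 0 = Submodule.span ℂ {V.one})
    (hC2 : FiniteDimensional ℂ (V.carrier ⧸ V.C2)) :
    V.C2 ≤ V.C1 ∧ V.FinitelyGenerated :=
  ⟨VOA.C2_le_C1 hneg h0, VOA.finitelyGenerated_of_finiteDimensional_quotient_C2 hneg⟩
end

section
/- Let V be a vertex operator algebra, W a weak V-module, and n ≥ 2. Then, identifying (W/C_n(W))* with the subspace of W* of functionals vanishing on C_n(W), one has (W/C_n(W))* = {α ∈ W* : v*_m α = 0 for all homogeneous v ∈ V and all m ≥ 2·wt(v) + n − 2}. In particular, (W/C_n(W))* ⊆ D(W). -/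
/-!
Since `L(-1)u = u₋₂𝟏`, the module satisfies `(L(-1)u)₋ₙ = n u₋ₙ₋₁`, so `Cₙ₊₁(W) ⊆ Cₙ(W)` for
`n ≥ 1`. For `v` of weight `k`, the functional `v*_{2k+j-2} α` is the sum over `i ≥ 0` of
`(-1)ᵏ/i! α((L(1)ⁱv)_{-j-i} ·)`; when `j ≥ n`, every term vanishes if `α` kills `Cₙ(W)`.
Conversely, `L(1)` lowers weights and the weights of `V` are bounded below, so induction on `k`
isolates the leading term `α(v₋ⱼ ·)`.
-/

theorem cchoose_eq_ringChoose (m : ℤ) (i : ℕ) : cchoose m i = Ring.choose (m : ℂ) i := by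
  rw [cchoose, Ring.choose_eq_smul, ← Polynomial.aeval_eq_smeval, ← Polynomial.eval_map_algebraMap,
    descPochhammer_map, descPochhammer_eval_eq_prod_range, smul_eq_mul, inv_mul_eq_div]

theorem cchoose_zero_left_s14 {i : ℕ} (hi : i ≠ 0) : cchoose 0 i = 0 := by
  rw [cchoose_eq_ringChoose, Int.cast_zero, Ring.choose_zero_pos ℂ (Nat.pos_of_ne_zero hi)]

theorem cchoose_zero_right (m : ℤ) : cchoose m 0 = 1 := by
  rw [cchoose_eq_ringChoose, Ring.choose_zero_right]

theorem neg_one_pow_mul_cchoose_neg (m : ℤ) (i : ℕ) :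
    (-1 : ℂ) ^ i * cchoose (-m) i = Ring.multichoose (m : ℂ) i := by
  have sq_eq_one : (-1 : ℂ) ^ i * (-1) ^ i = 1 := by rw [← mul_pow]; norm_num
  rw [cchoose_eq_ringChoose, Int.cast_neg, Ring.choose_neg', Int.negOnePow_def, Units.smul_def,
    zpow_natCast, zsmul_eq_mul]
  push_cast
  rw [← mul_assoc, sq_eq_one, one_mul]

theorem neg_one_pow_mul_cchoose_neg_two (i : ℕ) : (-1 : ℂ) ^ i * cchoose (-2) i = i + 1 := by
  rw [neg_one_pow_mul_cchoose_neg, Int.cast_ofNat, Ring.multichoose_two]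

namespace VOA

variable (V : VOA)

theorem L_neg_one_eq_op_one (u : V.carrier) : V.L (-1) u = V.op u (-2) V.one := by
  have h := V.L_neg_one u (-1) V.one
  rw [V.create] at h
  simpa [L] using h

theorem L_zero_right (k : ℤ) : V.L k 0 = 0 :=
  (V.op_linear_right V.omega (k + 1)).map_zero

variable {V}

theorem L_mem_wtSpace {k : ℤ} {v : V.carrier} (hv : v ∈ V.wtSpace k) (m : ℤ) :
    V.L m v ∈ V.wtSpace (k - m) := by
  have h := V.op_wt 2 k (m + 1) V.omega V.omega_wt v hv
  rwa [show 2 + k - (m + 1) - 1 = k - m by ring] at h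

theorem iterate_L_one_mem_wtSpace {k : ℤ} {v : V.carrier} (hv : v ∈ V.wtSpace k) (i : ℕ) :
    (V.L 1)^[i] v ∈ V.wtSpace (k - i) := by
  induction i with
  | zero => simpa using hv
  | succ i ih =>
    rw [Function.iterate_succ_apply', Nat.cast_succ, ← sub_sub]
    exact L_mem_wtSpace ih 1

end VOA

namespace WeakModule

variable {V : VOA} (W : WeakModule V)

theorem op_zero_left (n : ℤ) (w : W.carrier) : W.op 0 n w = 0 :=
  (W.op_linear_left n w).map_zero

theorem op_zero_right (u : V.carrier) (n : ℤ) : W.op u n 0 = 0 :=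
  (W.op_linear_right u n).map_zero

theorem op_L_neg_one (u : V.carrier) (n : ℤ) (w : W.carrier) :
    W.op (V.L (-1) u) n w = -(n : ℂ) • W.op u (n - 1) w := by
  have borcherds := W.borcherds u V.one w (-2) 0 n
  rw [finsum_eq_single _ 0 fun i hi => by rw [cchoose_zero_left_s14 hi, zero_smul]] at borcherds
  simp only [cchoose_zero_right, neg_one_pow_mul_cchoose_neg_two, W.one_op, one_smul,
    Nat.cast_zero, add_zero, zero_add, sub_zero] at borcherds
  rw [V.L_neg_one_eq_op_one, borcherds]
  have term_eq_zero (i : ℕ) (h_left : n + i ≠ -1) (h_right : -2 + n - i ≠ -1) :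
      ((i : ℂ) + 1) • (W.op u (-2 - i) (if n + i = -1 then w else 0) -
        (-1 : ℂ) ^ (-2 : ℤ) • if -2 + n - i = -1 then W.op u i w else 0) = 0 := by
    rw [if_neg h_left, if_neg h_right, op_zero_right, smul_zero, sub_zero, smul_zero]
  -- Only `i = -n - 1` (in `u₋₂₋ᵢ 𝟏ₙ₊ᵢ`) and `i = n - 1` (in `𝟏ₙ₋₂₋ᵢ uᵢ`) can contribute.
  rcases lt_trichotomy n 0 with hn | rfl | hn
  · obtain ⟨j, rfl⟩ : ∃ j : ℕ, n = -(j + 1) := ⟨(-n - 1).toNat, by omega⟩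
    rw [finsum_eq_single _ j fun i hi => term_eq_zero i (by omega) (by omega),
      if_pos (by omega), if_neg (by omega), smul_zero, sub_zero,
      show -((j : ℤ) + 1) - 1 = -2 - j by ring]
    push_cast
    rw [neg_neg]
  · rw [finsum_eq_zero_of_forall_eq_zero fun i => term_eq_zero i (by omega) (by omega),
      Int.cast_zero, neg_zero, zero_smul]
  · obtain ⟨j, rfl⟩ : ∃ j : ℕ, n = j + 1 := ⟨(n - 1).toNat, by omega⟩
    rw [finsum_eq_single _ j fun i hi => term_eq_zero i (by omega) (by omega),
      if_neg (by omega), if_pos (by omega), op_zero_right, zero_sub, add_sub_cancel_right,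
      even_two.neg.neg_one_zpow, one_smul, smul_neg, neg_smul, Int.cast_add, Int.cast_natCast,
      Int.cast_one]

theorem op_neg_mem_Cn (n : ℤ) (v : V.carrier) (w : W.carrier) : W.op v (-n) w ∈ W.Cn n :=
  Submodule.subset_span ⟨v, w, rfl⟩

theorem Cn_add_one_le {n : ℤ} (hn : n ≠ 0) : W.Cn (n + 1) ≤ W.Cn n := by
  refine Submodule.span_le.mpr ?_
  rintro _ ⟨v, w, rfl⟩
  have hn' : (n : ℂ) ≠ 0 := Int.cast_ne_zero.mpr hn
  have deriv : W.op (V.L (-1) v) (-n) w = (n : ℂ) • W.op v (-(n + 1)) w := by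
    rw [op_L_neg_one, Int.cast_neg, neg_neg, neg_add']
  rw [SetLike.mem_coe, ← Submodule.smul_mem_iff _ hn', ← deriv]
  exact W.op_neg_mem_Cn n _ w

theorem antitoneOn_Cn : AntitoneOn W.Cn (Set.Ici 1) :=
  antitoneOn_of_add_one_le Set.ordConnected_Ici fun _ _ hn _ =>
    W.Cn_add_one_le (zero_lt_one.trans_le hn).ne'

variable {W}

theorem Cn_le_of_forall_wtSpace {n : ℤ} {S : Submodule ℂ W.carrier}
    (h : ∀ k, ∀ v ∈ V.wtSpace k, ∀ w, W.op v (-n) w ∈ S) : W.Cn n ≤ S := by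
  refine Submodule.span_le.mpr ?_
  rintro _ ⟨v, w, rfl⟩
  let opLeft : V.carrier →ₗ[ℂ] W.carrier := IsLinearMap.mk' _ (W.op_linear_left (-n) w)
  change opLeft v ∈ S
  rw [← V.proj_sum v, finsum_eq_sum _ (V.proj_finite v), map_sum]
  exact S.sum_mem fun k _ => h k _ (V.proj_mem k v) w

theorem dmode_zero_left (m : ℤ) (α : Module.Dual ℂ W.carrier) (w : W.carrier) :
    W.dmode 0 m α w = 0 := by
  simp [dmode, (V.proj_linear _).map_zero, Function.iterate_fixed (V.L_zero_right 1),
    W.op_zero_left]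

theorem dmode_of_mem_wtSpace {k : ℤ} {v : V.carrier} (hv : v ∈ V.wtSpace k) (m : ℤ)
    (α : Module.Dual ℂ W.carrier) (w : W.carrier) :
    W.dmode v m α w = ∑ᶠ i : ℕ, ((-1) ^ k / (i.factorial : ℂ)) *
      α (W.op ((V.L 1)^[i] v) (2 * k - m - i - 2) w) := by
  rw [dmode, finsum_eq_single _ k, V.proj_eq k v hv]
  intro h hk
  simp [V.proj_ne k h hk.symm v hv, Function.iterate_fixed (V.L_zero_right 1), W.op_zero_left]

theorem dmode_eq_finsum_dmode_proj (v : V.carrier) (m : ℤ) (α : Module.Dual ℂ W.carrier)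
    (w : W.carrier) : W.dmode v m α w = ∑ᶠ k, W.dmode (V.proj k v) m α w := by
  simp only [dmode_of_mem_wtSpace (V.proj_mem _ v)]
  rfl

section Annihilator

variable {n : ℤ} {α : Module.Dual ℂ W.carrier}

theorem apply_op_eq_zero_of_mem_dualAnnihilator_Cn (hn : 1 ≤ n) (hα : α ∈ (W.Cn n).dualAnnihilator)
    {m : ℤ} (hm : m ≤ -n) (v : V.carrier) (w : W.carrier) : α (W.op v m w) = 0 := by
  obtain ⟨j, rfl⟩ : ∃ j, m = -j := ⟨-m, (neg_neg m).symm⟩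
  have hnj : n ≤ j := neg_le_neg_iff.mp hm
  exact (Submodule.mem_dualAnnihilator α).mp hα _ <|
    W.antitoneOn_Cn hn (hn.trans hnj) hnj (W.op_neg_mem_Cn j v w)

theorem dmode_eq_zero_of_mem_dualAnnihilator_Cn (hn : 1 ≤ n)
    (hα : α ∈ (W.Cn n).dualAnnihilator) {k : ℤ} {v : V.carrier} (hv : v ∈ V.wtSpace k) {m : ℤ}
    (hm : 2 * k + n - 2 ≤ m) (w : W.carrier) : W.dmode v m α w = 0 := by
  rw [dmode_of_mem_wtSpace hv]
  refine finsum_eq_zero_of_forall_eq_zero fun i => ?_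
  rw [apply_op_eq_zero_of_mem_dualAnnihilator_Cn hn hα (by omega), mul_zero]

theorem coe_mem_DW_of_mem_dualAnnihilator_Cn (hn : 1 ≤ n)
    (hα : α ∈ (W.Cn n).dualAnnihilator) : ⇑α ∈ W.DW := by
  refine ⟨α.isLinear, fun v => ?_⟩
  obtain ⟨B, hB⟩ := (V.proj_finite v).bddAbove
  refine ⟨2 * B + n - 2, fun m hm w => ?_⟩
  rw [dmode_eq_finsum_dmode_proj]
  refine finsum_eq_zero_of_forall_eq_zero fun k => ?_
  by_cases hk : V.proj k v = 0
  · rw [hk, dmode_zero_left]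
  · have hkB : k ≤ B := hB hk
    exact dmode_eq_zero_of_mem_dualAnnihilator_Cn hn hα (V.proj_mem k v) (by omega) w

theorem dmode_eq_leading_term {k j : ℤ} {v : V.carrier} (hv : v ∈ V.wtSpace k) (w : W.carrier)
    (h : ∀ i : ℕ, i ≠ 0 → α (W.op ((V.L 1)^[i] v) (-(j + i)) w) = 0) :
    W.dmode v (2 * k + j - 2) α w = (-1) ^ k * α (W.op v (-j) w) := by
  have mode (i : ℕ) : 2 * k - (2 * k + j - 2) - i - 2 = -(j + i) := by ring
  simp only [dmode_of_mem_wtSpace hv, mode]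
  rw [finsum_eq_single _ 0 fun i hi => by rw [h i hi, mul_zero]]
  simp

theorem apply_op_eq_zero_of_forall_dmode_eq_zero
    (h : ∀ k, ∀ v ∈ V.wtSpace k, ∀ m, 2 * k + n - 2 ≤ m → ∀ w, W.dmode v m α w = 0)
    {k : ℤ} {v : V.carrier} (hv : v ∈ V.wtSpace k) {j : ℤ} (hj : n ≤ j) (w : W.carrier) :
    α (W.op v (-j) w) = 0 := by
  obtain ⟨N, hN⟩ := V.lower_trunc
  induction k using Int.strongRec (m := N) generalizing v j with
  | lt k hk =>
    rw [hN k hk, Submodule.mem_bot] at hv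
    rw [hv, op_zero_left, map_zero]
  | ge k _ ih =>
    have leading := dmode_eq_leading_term (α := α) (j := j) hv w fun i hi =>
      ih (k - i) (by omega) (VOA.iterate_L_one_mem_wtSpace hv i) (by omega)
    rw [h k v hv _ (by omega)] at leading
    exact (mul_eq_zero.mp leading.symm).resolve_left (zpow_ne_zero k (by norm_num))

theorem mem_dualAnnihilator_Cn_of_forall_dmode_eq_zero
    (h : ∀ k, ∀ v ∈ V.wtSpace k, ∀ m, 2 * k + n - 2 ≤ m → ∀ w, W.dmode v m α w = 0) :
    α ∈ (W.Cn n).dualAnnihilator := by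
  have le_ker : W.Cn n ≤ LinearMap.ker α :=
    Cn_le_of_forall_wtSpace fun _ _ hv w => apply_op_eq_zero_of_forall_dmode_eq_zero h hv le_rfl w
  exact (Submodule.mem_dualAnnihilator α).mpr fun x hx => le_ker hx

end Annihilator

end WeakModule

/-- For a weak `V`-module `W` and `n ≥ 2`, identifying
`(W/Cₙ(W))*` with the functionals in `W*` vanishing on `Cₙ(W)`, one has
`(W/Cₙ(W))* = {α ∈ W* : v*ₘ α = 0 for all homogeneous v ∈ V and all m ≥ 2·wt(v)+n-2}`,
and in particular `(W/Cₙ(W))* ⊆ D(W)`. -/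
theorem Cn_dual_eq_and_subset_DW (V : VOA) (W : WeakModule V) (n : ℤ) (hn : 2 ≤ n) :
    ({α : W.carrier → ℂ | IsLinearMap ℂ α ∧ ∀ x ∈ W.Cn n, α x = 0}
      = {α : W.carrier → ℂ | IsLinearMap ℂ α ∧ ∀ k : ℤ, ∀ v ∈ V.wtSpace k,
          ∀ m : ℤ, 2 * k + n - 2 ≤ m → ∀ w : W.carrier, W.dmode v m α w = 0}) ∧
    {α : W.carrier → ℂ | IsLinearMap ℂ α ∧ ∀ x ∈ W.Cn n, α x = 0} ⊆ W.DW := by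
  have one_le : 1 ≤ n := one_le_two.trans hn
  have mem_dualAnnihilator {α : W.carrier → ℂ} (hα : IsLinearMap ℂ α)
      (h : ∀ x ∈ W.Cn n, α x = 0) : IsLinearMap.mk' α hα ∈ (W.Cn n).dualAnnihilator :=
    (Submodule.mem_dualAnnihilator _).mpr h
  refine ⟨Set.ext fun α => and_congr_right fun hα => ⟨fun h k v hv m hm w => ?_, fun h => ?_⟩, ?_⟩
  · exact WeakModule.dmode_eq_zero_of_mem_dualAnnihilator_Cn one_le (mem_dualAnnihilator hα h)
      hv hm w
  · exact (Submodule.mem_dualAnnihilator (IsLinearMap.mk' α hα)).mp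
      (WeakModule.mem_dualAnnihilator_Cn_of_forall_dmode_eq_zero h)
  · rintro α ⟨hα, h⟩
    exact WeakModule.coe_mem_DW_of_mem_dualAnnihilator_Cn one_le (mem_dualAnnihilator hα h)
end
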